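/- arXiv:1803.00540 — 3 statements merged into one kernel-verified Lean document; each statement's English description precedes it below -/
import Mathlib

section
/- A permutation x in A_N lies in A_N^o (i.e., all cycles of x, including fixed points, have odd length) if and only if ℓ_3(x) = ℓ_2(x)/2, where ℓ_2(x) = N - cyc(x) is the reflection length with respect to transpositions. -/
open Equiv Equiv.Perm

/-- The word length of `x` with respect to a generating set `T`. -/
noncomputable def lenT {G : Type*} [Group G] (T : Set G) (x : G) : ℕ :=
  sInf {n | ∃ l : List G, (∀ t ∈ l, t ∈ T) ∧ l.prod = x ∧ l.length = n}

/-- The `T`-prefix order. -/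
def leT {G : Type*} [Group G] (T : Set G) (x y : G) : Prop :=
  lenT T y = lenT T x + lenT T (x⁻¹ * y)

/-- The set of 3-cycles of the symmetric group on `Fin N`. -/
def threeCycles (N : ℕ) : Set (Perm (Fin N)) := {σ | σ.IsThreeCycle}

/-- The set of transpositions of the symmetric group on `Fin N`. -/
def transpositions (N : ℕ) : Set (Perm (Fin N)) := {σ | σ.IsSwap}

/-- The number of odd cycles of a permutation, counting fixed points. -/
def ocyc {N : ℕ} (x : Perm (Fin N)) : ℕ :=
  (x.cycleType.filter (fun n => Odd n)).card + (N - x.cycleType.sum)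

/-!
A cycle of `y` that avoids the support of `c` is still a cycle of `c * y`, so multiplying by `c`
destroys at most `#c.support` cycles. A transposition thus destroys at most two cycles, and since it
flips the sign `(-1) ^ (N - cyc y)`, the number of cycles drops by at most one.
A 3-cycle destroys at most three odd cycles, and since the number of odd cycles always has the
parity of `N`, it drops by at most two. Starting from the identity this gives `N - cyc x ≤ ℓ₂ x` and
`N - ocyc x ≤ 2 ℓ₃ x`. The first bound is attained by every `x`, so `2 ℓ₃ x ≤ ℓ₂ x = N - cyc x`
forces every cycle to be odd. Conversely a cycle of length `2 k + 1` is a product of `k` 3-cycles.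
-/

open Finset
open scoped Pointwise

section SetPowers

variable {M : Type*} [Monoid M] {T : Set M} {x : M} {n : ℕ}

lemma mem_pow_iff_exists_list :
    x ∈ T ^ n ↔ ∃ l : List M, (∀ t ∈ l, t ∈ T) ∧ l.prod = x ∧ l.length = n := by
  rw [Set.mem_pow]
  constructor
  · rintro ⟨f, rfl⟩
    exact ⟨List.ofFn fun i ↦ (f i : M), by simp, rfl, by simp⟩
  · rintro ⟨l, hl, rfl, rfl⟩
    exact ⟨fun i ↦ ⟨l.get i, hl _ (l.get_mem i)⟩, by simp⟩

lemma apply_one_le_apply_add_mul_of_mem_pow {F : M → ℕ} {k : ℕ}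
    (hF : ∀ t ∈ T, ∀ y, F y ≤ F (t * y) + k) (hx : x ∈ T ^ n) : F 1 ≤ F x + k * n := by
  induction n generalizing x with
  | zero => simp_all
  | succ n ih =>
    rw [pow_succ'] at hx
    obtain ⟨t, ht, y, hy, rfl⟩ := Set.mem_mul.mp hx
    calc F 1 ≤ F y + k * n := ih hy
      _ ≤ F (t * y) + k + k * n := by gcongr; exact hF t ht y
      _ = F (t * y) + k * (n + 1) := by ring

end SetPowers

section WordLength

variable {G : Type*} [Group G] {T : Set G} {x : G} {n : ℕ}

lemma lenT_eq_sInf_pow (T : Set G) (x : G) : lenT T x = sInf {n | x ∈ T ^ n} := by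
  simp only [lenT, mem_pow_iff_exists_list]

lemma lenT_le_of_mem_pow (hx : x ∈ T ^ n) : lenT T x ≤ n := by
  rw [lenT_eq_sInf_pow]
  exact Nat.sInf_le hx

-- `lenT T` has the junk value `0` on elements that `T` does not generate.
lemma mem_pow_lenT (hx : x ∈ T ^ n) : x ∈ T ^ lenT T x := by
  rw [lenT_eq_sInf_pow]
  exact Nat.sInf_mem (s := {n | x ∈ T ^ n}) ⟨n, hx⟩

lemma exists_mem_pow_of_mem_closure (hT : T⁻¹ ⊆ T) (hx : x ∈ Subgroup.closure T) :
    ∃ n, x ∈ T ^ n := by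
  rw [← Subgroup.mem_toSubmonoid, Subgroup.closure_toSubmonoid, Set.union_eq_left.mpr hT] at hx
  obtain ⟨l, hl, rfl⟩ := Submonoid.exists_list_of_mem_closure hx
  exact ⟨l.length, mem_pow_iff_exists_list.mpr ⟨l, hl, rfl, rfl⟩⟩

end WordLength

section Partition

variable {α : Type*} [DecidableEq α] {s : Finset α}

lemma card_filter_parts_le_add_card (P Q : Finpartition s) (S : Finset α)
    (p : Finset α → Prop) [DecidablePred p]
    (h : ∀ t ∈ P.parts, _root_.Disjoint t S → t ∈ Q.parts) :
    #{t ∈ P.parts | p t} ≤ #{t ∈ Q.parts | p t} + #S := by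
  have hsub : {t ∈ P.parts | p t} ⊆ {t ∈ Q.parts | p t} ∪ S.image P.part := by
    intro t ht
    obtain ⟨htP, hpt⟩ := mem_filter.mp ht
    by_cases hdisj : _root_.Disjoint t S
    · exact mem_union_left _ (mem_filter.mpr ⟨h t htP hdisj, hpt⟩)
    · obtain ⟨a, hat, haS⟩ := not_disjoint_iff.mp hdisj
      exact mem_union_right _ (mem_image.mpr ⟨a, haS, P.part_eq_of_mem htP hat⟩)
  calc #{t ∈ P.parts | p t} ≤ #({t ∈ Q.parts | p t} ∪ S.image P.part) := card_le_card hsub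
    _ ≤ #{t ∈ Q.parts | p t} + #(S.image P.part) := card_union_le _ _
    _ ≤ #{t ∈ Q.parts | p t} + #S := by gcongr; exact card_image_le

end Partition

section Cycles

variable {α : Type*} [Fintype α] [DecidableEq α] {x y c σ : Perm α}

instance (x : Perm α) : DecidableRel (SameCycle.setoid x) :=
  inferInstanceAs (DecidableRel x.SameCycle)

/-- The partition of `α` into the cycles of `x`, each fixed point being a cycle of length one. -/
def cyclePartition (x : Perm α) : Finpartition (univ : Finset α) :=
  Finpartition.ofSetoid (SameCycle.setoid x)

/-- The number of cycles of `x`, fixed points included: the paper's `cyc(x)`. -/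
def numCycles (x : Perm α) : ℕ :=
  #(cyclePartition x).parts

/-- The number of odd cycles of `x`, fixed points included, counted as parts of `cyclePartition x`;
for `α = Fin N` this is `ocyc x`. -/
def numOddCycles (x : Perm α) : ℕ :=
  #{s ∈ (cyclePartition x).parts | Odd #s}

lemma mem_part_cyclePartition {a b : α} : b ∈ (cyclePartition x).part a ↔ x.SameCycle a b :=
  Finpartition.mem_part_ofSetoid_iff_rel

lemma part_cyclePartition_of_apply_eq {a : α} (ha : x a = a) : (cyclePartition x).part a = {a} := by
  ext b
  rw [mem_part_cyclePartition, mem_singleton]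
  exact ⟨fun h ↦ (h.eq_of_left ha).symm, fun h ↦ h ▸ SameCycle.refl _ _⟩

lemma part_cyclePartition_of_mem_support {a : α} (ha : a ∈ x.support) :
    (cyclePartition x).part a = (x.cycleOf a).support := by
  ext b
  rw [mem_part_cyclePartition, mem_support_cycleOf_iff, and_iff_left ha]

lemma support_mem_parts_cyclePartition (hσ : σ ∈ x.cycleFactorsFinset) :
    σ.support ∈ (cyclePartition x).parts := by
  obtain ⟨a, ha⟩ := (mem_cycleFactorsFinset_iff.mp hσ).1.nonempty_support
  rw [cycle_is_cycleOf ha hσ,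
    ← part_cyclePartition_of_mem_support (mem_cycleFactorsFinset_support_le hσ ha)]
  exact (cyclePartition x).part_mem.mpr (mem_univ a)

lemma exists_mem_parts_card_eq_of_mem_cycleType {n : ℕ} (hn : n ∈ x.cycleType) :
    ∃ s ∈ (cyclePartition x).parts, #s = n := by
  obtain ⟨σ, hσ, rfl⟩ := Multiset.mem_map.mp hn
  exact ⟨σ.support, support_mem_parts_cyclePartition hσ, rfl⟩

lemma injOn_support_cycleFactorsFinset (x : Perm α) :
    Set.InjOn support (x.cycleFactorsFinset : Set (Perm α)) := by
  intro σ hσ τ hτ h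
  obtain ⟨a, ha⟩ := (mem_cycleFactorsFinset_iff.mp hσ).1.nonempty_support
  rw [cycle_is_cycleOf ha hσ, cycle_is_cycleOf (h ▸ ha) hτ]

lemma sum_parts_cyclePartition (x : Perm α) {g : ℕ → ℕ} (hg : g 1 = 0) :
    ∑ s ∈ (cyclePartition x).parts, g #s = (x.cycleType.map g).sum := by
  have hsub : x.cycleFactorsFinset.image support ⊆ (cyclePartition x).parts :=
    image_subset_iff.mpr fun _ ↦ support_mem_parts_cyclePartition
  have hsingle : ∀ s ∈ (cyclePartition x).parts, s ∉ x.cycleFactorsFinset.image support →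
      g #s = 0 := by
    intro s hs hs'
    obtain ⟨a, -, rfl⟩ := (cyclePartition _).part_surjOn hs
    by_cases ha : a ∈ x.support
    · exact absurd (mem_image.mpr ⟨_, cycleOf_mem_cycleFactorsFinset_iff.mpr ha,
        (part_cyclePartition_of_mem_support ha).symm⟩) hs'
    · rw [part_cyclePartition_of_apply_eq (notMem_support.mp ha), card_singleton, hg]
  rw [← sum_subset hsub hsingle, sum_image (injOn_support_cycleFactorsFinset x), cycleType_def,
    Multiset.map_map]
  rfl

lemma numCycles_add_sum_map_pred_cycleType (x : Perm α) :
    numCycles x + (x.cycleType.map (· - 1)).sum = Fintype.card α := by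
  rw [← sum_parts_cyclePartition x (g := (· - 1)) rfl, numCycles, card_eq_sum_ones,
    ← sum_add_distrib, ← card_univ, ← (cyclePartition x).sum_card_parts]
  refine sum_congr rfl fun s hs ↦ ?_
  have hpos := ((cyclePartition x).nonempty_of_mem_parts hs).card_pos
  omega

lemma sum_map_pred_cycleType_add_card (x : Perm α) :
    (x.cycleType.map (· - 1)).sum + x.cycleType.card = x.cycleType.sum := by
  have hpred : ∀ n ∈ x.cycleType, n - 1 + 1 = n := fun n hn ↦
    Nat.sub_add_cancel (one_lt_of_mem_cycleType hn).le
  calc (x.cycleType.map (· - 1)).sum + x.cycleType.card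
      = (x.cycleType.map fun n ↦ n - 1 + 1).sum := by simp [Multiset.sum_map_add]
    _ = x.cycleType.sum := by rw [Multiset.map_congr rfl hpred, Multiset.map_id']

lemma sign_eq_one_iff_even_card_add_numCycles (x : Perm α) :
    sign x = 1 ↔ Even (Fintype.card α + numCycles x) := by
  rw [sign_of_cycleType, neg_one_pow_eq_one_iff_even (by decide),
    ← numCycles_add_sum_map_pred_cycleType x, ← sum_map_pred_cycleType_add_card x]
  grind

lemma numOddCycles_le_numCycles (x : Perm α) : numOddCycles x ≤ numCycles x :=
  card_filter_le _ _

lemma forall_odd_cycleType_of_numCycles_le_numOddCycles (h : numCycles x ≤ numOddCycles x) :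
    ∀ n ∈ x.cycleType, Odd n := by
  intro n hn
  obtain ⟨s, hs, rfl⟩ := exists_mem_parts_card_eq_of_mem_cycleType hn
  have hall := eq_of_subset_of_card_le (filter_subset _ (cyclePartition x).parts) h
  exact (filter_eq_self.mp hall) s hs

lemma odd_numOddCycles_iff (x : Perm α) : Odd (numOddCycles x) ↔ Odd (Fintype.card α) := by
  rw [numOddCycles, ← odd_sum_iff_odd_card_odd, (cyclePartition x).sum_card_parts, card_univ]

lemma numCycles_one : numCycles (1 : Perm α) = Fintype.card α := by
  simpa using numCycles_add_sum_map_pred_cycleType (1 : Perm α)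

lemma numOddCycles_one : numOddCycles (1 : Perm α) = Fintype.card α := by
  rw [← numCycles_one, numOddCycles, numCycles, filter_eq_self.mpr]
  intro s hs
  obtain ⟨a, -, rfl⟩ := (cyclePartition _).part_surjOn hs
  rw [part_cyclePartition_of_apply_eq rfl, card_singleton]
  exact odd_one

lemma mem_parts_cyclePartition_mul_of_disjoint {s : Finset α} (hs : s ∈ (cyclePartition y).parts)
    (hdisj : _root_.Disjoint s c.support) : s ∈ (cyclePartition (c * y)).parts := by
  obtain ⟨a, -, rfl⟩ := (cyclePartition y).part_surjOn hs
  have hpow : ∀ n : ℕ, ((c * y) ^ n) a = (y ^ n) a := by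
    intro n
    induction n with
    | zero => rfl
    | succ n ih =>
      have hmem : (y ^ (n + 1)) a ∈ (cyclePartition y).part a :=
        mem_part_cyclePartition.mpr (sameCycle_pow_right.mpr (SameCycle.refl _ _))
      rw [pow_succ', mul_apply, ih, mul_apply, ← mul_apply y, ← pow_succ']
      exact notMem_support.mp (disjoint_left.mp hdisj hmem)
  have hpart : (cyclePartition (c * y)).part a = (cyclePartition y).part a := by
    ext b
    simp only [mem_part_cyclePartition]
    constructor <;> intro h <;> obtain ⟨n, -, rfl⟩ := h.exists_pow_eq'
    · rw [hpow]
      exact sameCycle_pow_right.mpr (SameCycle.refl _ _)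
    · rw [← hpow]
      exact sameCycle_pow_right.mpr (SameCycle.refl _ _)
  rw [← hpart]
  exact (cyclePartition (c * y)).part_mem.mpr (mem_univ a)

lemma numCycles_le_numCycles_mul_add_card_support (c y : Perm α) :
    numCycles y ≤ numCycles (c * y) + #c.support := by
  simpa [numCycles] using card_filter_parts_le_add_card (cyclePartition y) (cyclePartition (c * y))
    c.support (fun _ ↦ True) fun _ ↦ mem_parts_cyclePartition_mul_of_disjoint

lemma numOddCycles_le_numOddCycles_mul_add_card_support (c y : Perm α) :
    numOddCycles y ≤ numOddCycles (c * y) + #c.support :=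
  card_filter_parts_le_add_card _ _ c.support (Odd #·) fun _ ↦
    mem_parts_cyclePartition_mul_of_disjoint

lemma numCycles_le_numCycles_mul_add_one_of_isSwap (hc : c.IsSwap) (y : Perm α) :
    numCycles y ≤ numCycles (c * y) + 1 := by
  have hle := numCycles_le_numCycles_mul_add_card_support c y
  rw [card_support_eq_two.mpr hc] at hle
  have hsign : sign (c * y) = 1 ↔ ¬ sign y = 1 := by
    rw [Perm.sign_mul, hc.sign_eq]
    rcases Int.units_eq_one_or (sign y) with h | h <;> simp [h]
  rw [sign_eq_one_iff_even_card_add_numCycles, sign_eq_one_iff_even_card_add_numCycles] at hsign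
  grind

lemma numOddCycles_le_numOddCycles_mul_add_two_of_isThreeCycle (hc : c.IsThreeCycle) (y : Perm α) :
    numOddCycles y ≤ numOddCycles (c * y) + 2 := by
  have hle := numOddCycles_le_numOddCycles_mul_add_card_support c y
  rw [hc.card_support] at hle
  have hparity : Odd (numOddCycles y) ↔ Odd (numOddCycles (c * y)) :=
    (odd_numOddCycles_iff y).trans (odd_numOddCycles_iff (c * y)).symm
  grind

end Cycles

section Factorization

variable {α : Type*} [DecidableEq α]

lemma formPerm_mem_isSwap_pow {l : List α} (hl : l.Nodup) :
    l.formPerm ∈ {σ : Perm α | σ.IsSwap} ^ (l.length - 1) := by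
  induction l with
  | nil => simp
  | cons a l ih =>
    cases l with
    | nil => simp
    | cons b l =>
      rw [List.formPerm_cons_cons, List.length_cons, Nat.add_sub_cancel, List.length_cons,
        pow_succ']
      exact Set.mul_mem_mul ⟨a, b, by grind, rfl⟩ (ih hl.of_cons)

variable [Fintype α] {x σ : Perm α}

lemma formPerm_mem_isThreeCycle_pow {n : ℕ} {l : List α} (hl : l.Nodup)
    (hlen : l.length = 2 * n + 1) : l.formPerm ∈ {σ : Perm α | σ.IsThreeCycle} ^ n := by
  induction n generalizing l with
  | zero =>
    obtain ⟨a, rfl⟩ := List.length_eq_one_iff.mp hlen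
    simp
  | succ n ih =>
    match l, hl, hlen with
    | a :: b :: c :: l, hl, hlen =>
      rw [List.formPerm_cons_cons, List.formPerm_cons_cons, ← mul_assoc, pow_succ']
      refine Set.mul_mem_mul ?_ (ih (by grind) (by grind))
      rw [swap_comm a b]
      exact isThreeCycle_swap_mul_swap_same (by grind) (by grind) (by grind)

lemma exists_nodup_formPerm_eq (hσ : σ.IsCycle) :
    ∃ l : List α, l.Nodup ∧ l.formPerm = σ ∧ l.length = #σ.support := by
  obtain ⟨a, ha⟩ := hσ.nonempty_support
  have hcycleOf : σ.cycleOf a = σ := hσ.cycleOf_eq (mem_support.mp ha)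
  exact ⟨σ.toList a, nodup_toList σ a, by rw [formPerm_toList, hcycleOf],
    by rw [Equiv.Perm.length_toList, hcycleOf]⟩

lemma mem_pow_sum_map_cycleType {T : Set (Perm α)} {f : ℕ → ℕ}
    (h : ∀ σ ∈ x.cycleFactorsFinset, σ ∈ T ^ f #σ.support) :
    x ∈ T ^ (x.cycleType.map f).sum := by
  induction x using cycle_induction_on with
  | base_one => simp
  | base_cycles σ hσ =>
    simpa [hσ.cycleType] using h σ (by simp [hσ.cycleFactorsFinset_eq_singleton])
  | induction_disjoint σ τ hd _ ihσ ihτ =>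
    simp only [hd.cycleFactorsFinset_mul_eq_union, mem_union] at h
    rw [hd.cycleType_mul, Multiset.map_add, Multiset.sum_add, pow_add]
    exact Set.mul_mem_mul (ihσ fun ρ hρ ↦ h ρ (.inl hρ)) (ihτ fun ρ hρ ↦ h ρ (.inr hρ))

lemma mem_isSwap_pow_sum_map_pred_cycleType (x : Perm α) :
    x ∈ {σ : Perm α | σ.IsSwap} ^ (x.cycleType.map (· - 1)).sum := by
  refine mem_pow_sum_map_cycleType fun σ hσ ↦ ?_
  obtain ⟨l, hl, rfl, hlen⟩ := exists_nodup_formPerm_eq (mem_cycleFactorsFinset_iff.mp hσ).1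
  rw [← hlen]
  exact formPerm_mem_isSwap_pow hl

lemma mem_isThreeCycle_pow_of_forall_odd (h : ∀ n ∈ x.cycleType, Odd n) :
    x ∈ {σ : Perm α | σ.IsThreeCycle} ^ (x.cycleType.map (fun n ↦ (n - 1) / 2)).sum := by
  refine mem_pow_sum_map_cycleType fun σ hσ ↦ ?_
  obtain ⟨k, hk⟩ : Odd #σ.support := h _ (Multiset.mem_map_of_mem _ hσ)
  obtain ⟨l, hl, rfl, hlen⟩ := exists_nodup_formPerm_eq (mem_cycleFactorsFinset_iff.mp hσ).1
  rw [hk, Nat.add_sub_cancel, Nat.mul_div_cancel_left k two_pos]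
  exact formPerm_mem_isThreeCycle_pow hl (hlen.trans hk)

end Factorization

lemma two_mul_sum_map_half_pred {m : Multiset ℕ} (hm : ∀ n ∈ m, Odd n) :
    2 * (m.map fun n ↦ (n - 1) / 2).sum = (m.map (· - 1)).sum := by
  rw [← Multiset.sum_map_mul_left]
  refine congrArg Multiset.sum (Multiset.map_congr rfl fun n hn ↦ ?_)
  obtain ⟨k, rfl⟩ := hm n hn
  omega

section CycleLengths

variable {α : Type*} [Fintype α] [DecidableEq α] {x : Perm α}

lemma lenT_isSwap_add_numCycles (x : Perm α) :
    lenT {σ : Perm α | σ.IsSwap} x + numCycles x = Fintype.card α := by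
  have hmem := mem_isSwap_pow_sum_map_pred_cycleType x
  have hupper := lenT_le_of_mem_pow hmem
  have hlower := apply_one_le_apply_add_mul_of_mem_pow (T := {σ : Perm α | σ.IsSwap})
    (fun _ ↦ numCycles_le_numCycles_mul_add_one_of_isSwap) (mem_pow_lenT hmem)
  have hcard := numCycles_add_sum_map_pred_cycleType x
  rw [numCycles_one] at hlower
  omega

lemma exists_mem_isThreeCycle_pow (hx : x ∈ alternatingGroup α) :
    ∃ n, x ∈ {σ : Perm α | σ.IsThreeCycle} ^ n := by
  rw [← closure_three_cycles_eq_alternating] at hx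
  exact exists_mem_pow_of_mem_closure (fun σ hσ ↦ IsThreeCycle.inv_iff.mp hσ) hx

lemma card_le_numOddCycles_add_two_mul_lenT_isThreeCycle (hx : x ∈ alternatingGroup α) :
    Fintype.card α ≤ numOddCycles x + 2 * lenT {σ : Perm α | σ.IsThreeCycle} x := by
  obtain ⟨n, hn⟩ := exists_mem_isThreeCycle_pow hx
  rw [← numOddCycles_one]
  exact apply_one_le_apply_add_mul_of_mem_pow
    (fun _ ↦ numOddCycles_le_numOddCycles_mul_add_two_of_isThreeCycle) (mem_pow_lenT hn)

lemma two_mul_lenT_isThreeCycle_add_numCycles_le (h : ∀ n ∈ x.cycleType, Odd n) :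
    2 * lenT {σ : Perm α | σ.IsThreeCycle} x + numCycles x ≤ Fintype.card α := by
  have hupper := lenT_le_of_mem_pow (mem_isThreeCycle_pow_of_forall_odd h)
  have hhalf := two_mul_sum_map_half_pred h
  have hcard := numCycles_add_sum_map_pred_cycleType x
  omega

theorem stmt1_general (hx : x ∈ alternatingGroup α) :
    (∀ n ∈ x.cycleType, Odd n) ↔
      lenT {σ : Perm α | σ.IsThreeCycle} x = lenT {σ : Perm α | σ.IsSwap} x / 2 := by
  have hswap := lenT_isSwap_add_numCycles x
  have hlower := card_le_numOddCycles_add_two_mul_lenT_isThreeCycle hx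
  constructor
  · intro hodd
    have hupper := two_mul_lenT_isThreeCycle_add_numCycles_le hodd
    have hle := numOddCycles_le_numCycles x
    omega
  · intro hlen
    exact forall_odd_cycleType_of_numCycles_le_numOddCycles (by omega)

end CycleLengths

/-- A permutation of `Fin N` lies in `A_N^o` iff all its cycles (fixed points included,
trivially of odd length 1) are odd, i.e. all entries of its cycle type are odd. -/
theorem stmt1 (N : ℕ) (x : Perm (Fin N)) (hx : x ∈ alternatingGroup (Fin N)) :
    (∀ c ∈ x.cycleType, Odd c) ↔
      lenT (threeCycles N) x = lenT (transpositions N) x / 2 :=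
  stmt1_general hx
end

section
/- Suppose x, y ∈ ONC_N with x ≤_2 y. Then the Kreweras complement K_y(x) = x⁻¹y also belongs to ONC_N. -/
open Equiv Equiv.Perm

open scoped Classical in
/-- The support of the cycle of `x` containing `a` (a singleton for a fixed point). -/
noncomputable def orbitF {N : ℕ} (x : Perm (Fin N)) (a : Fin N) : Finset (Fin N) :=
  Finset.univ.filter (fun b => x.SameCycle a b)

/-- Property (OD) for a cycle written as an increasing sequence `u₁ < u₂ < ⋯ < u_q`:
`q` is odd and all consecutive differences `u_{j+1} - u_j` are odd. -/
def ODfinset {N : ℕ} (S : Finset (Fin N)) : Prop :=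
  Odd S.card ∧ (S.sort (· ≤ ·)).Chain' (fun a b => Odd ((b : ℕ) - (a : ℕ)))

/-- All cycles of `x`, written as increasing sequences, satisfy property (OD). -/
def satisfiesOD {N : ℕ} (x : Perm (Fin N)) : Prop := ∀ a : Fin N, ODfinset (orbitF x a)

/-- Membership in `ONC_N`: a noncrossing partition all of whose cycles satisfy (OD). -/
def memONC {N : ℕ} (x : Perm (Fin N)) : Prop :=
  leT (transpositions N) x (finRotate N) ∧ satisfiesOD x

/-!
By Carter's argument, the absolute length of a permutation `w` is the codimension of the space of
functions constant on its cycles, so `x ≤ y` forces every function invariant under `y` to be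
invariant under `x`. Hence the cycles of `x` lie inside those of `y`. Applied to `t * w ≤ t * c`,
where `c` is the long cycle, `w ≤ c` and `t = (a w(a))`, it also shows that `w` runs through each of
its cycles in circular order: the cyclic interval `[a, w(a))` is invariant under `t * c`, hence
under `t * w`, and the latter fixes `a`.

For such `w`, property (OD) says that `a` and `w(a)` have different parity exactly when `a < w(a)`.
For `d = (x⁻¹ * y) a` we have `x d = y a`, and `d` is on the cycle of `a` under `y`, hence not
strictly between `a` and `y a`; the parity conditions for `x` at `d` and for `y` at `a` then give
the one for `x⁻¹ * y` at `a`. Finally `x⁻¹ * y ≤ c` because the length is invariant under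
conjugation.
-/

theorem finrank_add_finrank_le_add_finrank_inf {K V : Type*} [DivisionRing K] [AddCommGroup V]
    [Module K V] [FiniteDimensional K V] (U W : Submodule K V) :
    Module.finrank K U + Module.finrank K W ≤
      Module.finrank K V + Module.finrank K (U ⊓ W : Submodule K V) := by
  rw [← Submodule.finrank_sup_add_finrank_inf_eq]
  gcongr
  exact Submodule.finrank_le _

section WordLength

variable {G H : Type*} [Group G] [Group H] {T : Set G} {U : Set H}

theorem lenT_prod_le {l : List G} (hl : ∀ t ∈ l, t ∈ T) : lenT T l.prod ≤ l.length :=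
  Nat.sInf_le ⟨l, hl, rfl, rfl⟩

theorem exists_list_length_eq_lenT (hT : Submonoid.closure T = ⊤) (x : G) :
    ∃ l : List G, (∀ t ∈ l, t ∈ T) ∧ l.prod = x ∧ l.length = lenT T x := by
  obtain ⟨l, hl, hlx⟩ :=
    Submonoid.exists_list_of_mem_closure (s := T) (x := x) (hT ▸ Submonoid.mem_top x)
  have hne : {n | ∃ l : List G, (∀ t ∈ l, t ∈ T) ∧ l.prod = x ∧ l.length = n}.Nonempty :=
    ⟨l.length, l, hl, hlx, rfl⟩
  exact Nat.sInf_mem hne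

theorem lenT_mul_le (hT : Submonoid.closure T = ⊤) (x y : G) :
    lenT T (x * y) ≤ lenT T x + lenT T y := by
  obtain ⟨l, hl, rfl, hlx⟩ := exists_list_length_eq_lenT hT x
  obtain ⟨m, hm, rfl, hmy⟩ := exists_list_length_eq_lenT hT y
  rw [← hlx, ← hmy, ← List.prod_append, ← List.length_append]
  exact lenT_prod_le (List.forall_mem_append.2 ⟨hl, hm⟩)

theorem lenT_map_le (hT : Submonoid.closure T = ⊤) {f : G →* H} (hf : Set.MapsTo f T U) (x : G) :
    lenT U (f x) ≤ lenT T x := by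
  obtain ⟨l, hl, rfl, hlx⟩ := exists_list_length_eq_lenT hT x
  rw [← hlx, map_list_prod, ← List.length_map f]
  exact lenT_prod_le (by simpa using fun t ht => hf (hl t ht))

theorem leT_of_add_le (hT : Submonoid.closure T = ⊤) {x y : G}
    (h : lenT T x + lenT T (x⁻¹ * y) ≤ lenT T y) : leT T x y :=
  le_antisymm (by simpa using lenT_mul_le hT x (x⁻¹ * y)) h

theorem leT.inv_mul_inv_mul (hT : Submonoid.closure T = ⊤) {x y z : G} (hxy : leT T x y)
    (hyz : leT T y z) : leT T (x⁻¹ * y) (x⁻¹ * z) := by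
  have hz : lenT T z ≤ lenT T x + lenT T (x⁻¹ * z) := by simpa using lenT_mul_le hT x (x⁻¹ * z)
  refine leT_of_add_le hT ?_
  rw [show (x⁻¹ * y)⁻¹ * (x⁻¹ * z) = y⁻¹ * z by group]
  unfold leT at hxy hyz
  omega

theorem leT.inv_mul (hT : Submonoid.closure T = ⊤)
    (hconj : ∀ g, Set.MapsTo (MulAut.conj g) T T) {x y z : G} (hxy : leT T x y)
    (hyz : leT T y z) : leT T (x⁻¹ * y) z := by
  have hx : lenT T (MulAut.conj y⁻¹ x) ≤ lenT T x :=
    lenT_map_le hT (f := (MulAut.conj y⁻¹).toMonoidHom) (hconj y⁻¹) x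
  have hmul := lenT_mul_le hT (MulAut.conj y⁻¹ x) (y⁻¹ * z)
  rw [show MulAut.conj y⁻¹ x * (y⁻¹ * z) = (x⁻¹ * y)⁻¹ * z by simp [mul_assoc]] at hmul
  unfold leT at hxy hyz
  exact leT_of_add_le hT (by omega)

end WordLength

section InvariantFunctions

variable {α : Type*}

/-- The rational functions on `α` that are constant on the cycles of `w`. For finite `α`
their dimension is the number of cycles of `w`, fixed points included. -/
def invariantFunctions (w : Perm α) : Submodule ℚ (α → ℚ) :=
  LinearMap.eqLocus (LinearMap.funLeft ℚ ℚ w) LinearMap.id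

theorem mem_invariantFunctions {w : Perm α} {f : α → ℚ} :
    f ∈ invariantFunctions w ↔ f ∘ w = f :=
  Iff.rfl

theorem indicator_mem_invariantFunctions {w : Perm α} {s : Set α} :
    s.indicator 1 ∈ invariantFunctions w ↔ w ⁻¹' s = s := by
  have hcomp : s.indicator (1 : α → ℚ) ∘ w = (w ⁻¹' s).indicator 1 := rfl
  rw [mem_invariantFunctions, hcomp]
  exact ⟨Set.indicator_one_inj ℚ, fun h => by rw [h]⟩

theorem invariantFunctions_inf_le_mul (u v : Perm α) :
    invariantFunctions u ⊓ invariantFunctions v ≤ invariantFunctions (u * v) := by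
  rintro f ⟨hu, hv⟩
  rw [SetLike.mem_coe, mem_invariantFunctions] at hu hv
  rw [mem_invariantFunctions, coe_mul, ← Function.comp_assoc, hu, hv]

variable [DecidableEq α]

theorem mem_invariantFunctions_swap {a b : α} {f : α → ℚ} :
    f ∈ invariantFunctions (swap a b) ↔ f a = f b := by
  rw [mem_invariantFunctions]
  refine ⟨fun h => by simpa using congrFun h b, fun h => funext fun i => ?_⟩
  grind

theorem invariantFunctions_lt_swap_mul {w : Perm α} {a : α} (ha : w a ≠ a) :
    invariantFunctions w < invariantFunctions (swap a (w a) * w) := by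
  have hle : invariantFunctions w ≤ invariantFunctions (swap a (w a) * w) := fun f hf =>
    invariantFunctions_inf_le_mul _ _
      ⟨mem_invariantFunctions_swap.2 (congrFun hf a).symm, hf⟩
  have hfix : (swap a (w a) * w) ⁻¹' {a} = {a} := by
    ext i
    simp [swap_apply_eq_iff]
  refine SetLike.lt_iff_le_and_exists.2
    ⟨hle, _, indicator_mem_invariantFunctions.2 hfix, fun h => ha ?_⟩
  have hw := indicator_mem_invariantFunctions.1 h
  exact hw.symm.subset (Set.mem_singleton a)

variable [Fintype α]

theorem card_le_finrank_invariantFunctions_swap_add_one (a b : α) :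
    Fintype.card α ≤ Module.finrank ℚ (invariantFunctions (swap a b)) + 1 := by
  let φ : (α → ℚ) →ₗ[ℚ] ℚ := .proj (φ := fun _ => ℚ) a - .proj b
  have hφ : φ.ker = invariantFunctions (swap a b) := by
    ext f
    simp [φ, mem_invariantFunctions_swap, sub_eq_zero]
  have hrange : Module.finrank ℚ φ.range ≤ 1 := by
    simpa using Submodule.finrank_le φ.range
  have := φ.finrank_range_add_finrank_ker
  rw [hφ, Module.finrank_fintype_fun_eq_card] at this
  omega

theorem card_le_length_add_finrank_invariantFunctions {l : List (Perm α)}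
    (hl : ∀ t ∈ l, t.IsSwap) :
    Fintype.card α ≤ l.length + Module.finrank ℚ (invariantFunctions l.prod) := by
  induction l with
  | nil =>
    have htop : invariantFunctions (1 : Perm α) = ⊤ := eq_top_iff.2 fun f _ => rfl
    rw [List.prod_nil, htop, finrank_top, Module.finrank_fintype_fun_eq_card, List.length_nil,
      zero_add]
  | cons t l ih =>
    obtain ⟨⟨a, b, -, rfl⟩, htail⟩ := List.forall_mem_cons.1 hl
    have hswap := card_le_finrank_invariantFunctions_swap_add_one a b
    have hinf := finrank_add_finrank_le_add_finrank_inf (invariantFunctions (swap a b))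
      (invariantFunctions l.prod)
    have hmul := Submodule.finrank_mono (invariantFunctions_inf_le_mul (swap a b) l.prod)
    have := ih htail
    rw [Module.finrank_fintype_fun_eq_card] at hinf
    rw [List.prod_cons, List.length_cons]
    omega

theorem lenT_isSwap_add_finrank_invariantFunctions_le (w : Perm α) :
    lenT {σ : Perm α | σ.IsSwap} w + Module.finrank ℚ (invariantFunctions w) ≤
      Fintype.card α := by
  induction hn : w.support.card using Nat.strong_induction_on generalizing w with
  | _ n ih =>
    subst hn
    by_cases hw : w = 1
    · subst hw
      have hone : lenT {σ : Perm α | σ.IsSwap} 1 ≤ 0 := lenT_prod_le (l := []) (by simp)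
      have := Submodule.finrank_le (invariantFunctions (1 : Perm α))
      rw [Module.finrank_fintype_fun_eq_card] at this
      omega
    · obtain ⟨a, ha⟩ : ∃ a, w a ≠ a := by simpa [Equiv.ext_iff] using hw
      have hind := ih _ (card_support_swap_mul ha) _ rfl
      have hrank := Submodule.finrank_lt_finrank_of_lt (invariantFunctions_lt_swap_mul ha)
      have hlen := lenT_mul_le mclosure_isSwap (swap a (w a)) (swap a (w a) * w)
      have hswap : lenT {σ : Perm α | σ.IsSwap} (swap a (w a)) ≤ 1 := by
        simpa using lenT_prod_le (l := [swap a (w a)]) (T := {σ : Perm α | σ.IsSwap})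
          (by simpa using ⟨a, w a, ha.symm, rfl⟩)
      rw [swap_mul_self_mul] at hlen
      omega

theorem lenT_isSwap_add_finrank_invariantFunctions (w : Perm α) :
    lenT {σ : Perm α | σ.IsSwap} w + Module.finrank ℚ (invariantFunctions w) =
      Fintype.card α := by
  refine le_antisymm (lenT_isSwap_add_finrank_invariantFunctions_le w) ?_
  obtain ⟨l, hl, rfl, hlen⟩ := exists_list_length_eq_lenT mclosure_isSwap w
  exact hlen ▸ card_le_length_add_finrank_invariantFunctions hl

end InvariantFunctions

section AbsoluteOrder

variable {α : Type*} [DecidableEq α]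

theorem mapsTo_conj_isSwap (g : Perm α) :
    Set.MapsTo (MulAut.conj g) {σ : Perm α | σ.IsSwap} {σ : Perm α | σ.IsSwap} := by
  rintro _ ⟨a, b, hab, rfl⟩
  exact ⟨g a, g b, g.injective.ne hab, by simp [swap_apply_apply]⟩

variable [Finite α]

theorem leT.invariantFunctions_le {x y : Perm α} (h : leT {σ : Perm α | σ.IsSwap} x y) :
    invariantFunctions y ≤ invariantFunctions x := by
  have := Fintype.ofFinite α
  have hinf := finrank_add_finrank_le_add_finrank_inf (invariantFunctions x)
    (invariantFunctions (x⁻¹ * y))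
  have hle := invariantFunctions_inf_le_mul x (x⁻¹ * y)
  rw [mul_inv_cancel_left] at hle
  have hx := lenT_isSwap_add_finrank_invariantFunctions x
  have hy := lenT_isSwap_add_finrank_invariantFunctions y
  have hxy := lenT_isSwap_add_finrank_invariantFunctions (x⁻¹ * y)
  rw [Module.finrank_fintype_fun_eq_card] at hinf
  unfold leT at h
  exact (Submodule.eq_of_le_of_finrank_le hle (by omega)).symm.le.trans inf_le_left

theorem leT.preimage_eq {x y : Perm α} (h : leT {σ : Perm α | σ.IsSwap} x y) {s : Set α}
    (hs : y ⁻¹' s = s) : x ⁻¹' s = s :=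
  indicator_mem_invariantFunctions.1
    (h.invariantFunctions_le (indicator_mem_invariantFunctions.2 hs))

theorem leT.sameCycle_apply {x y : Perm α} (h : leT {σ : Perm α | σ.IsSwap} x y) (a : α) :
    y.SameCycle a (x a) := by
  have hy : y ⁻¹' {b | y.SameCycle a b} = {b | y.SameCycle a b} := by
    ext b
    exact sameCycle_apply_right
  exact (h.preimage_eq hy).symm.subset (SameCycle.refl y a)

theorem swap_apply_leT {w : Perm α} {a : α} (ha : w a ≠ a) :
    leT {σ : Perm α | σ.IsSwap} (swap a (w a)) w := by
  have := Fintype.ofFinite α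
  have hswap := card_le_finrank_invariantFunctions_swap_add_one a (w a)
  have hrank := Submodule.finrank_lt_finrank_of_lt (invariantFunctions_lt_swap_mul ha)
  have hlen_swap := lenT_isSwap_add_finrank_invariantFunctions (swap a (w a))
  have hlen_mul := lenT_isSwap_add_finrank_invariantFunctions (swap a (w a) * w)
  have hlen_w := lenT_isSwap_add_finrank_invariantFunctions w
  refine leT_of_add_le mclosure_isSwap ?_
  rw [swap_inv]
  omega

end AbsoluteOrder

section CircularOrder

variable {α : Type*}

theorem mem_iff_mem_of_sameCycle [Finite α] {w : Perm α} {s : Set α} (hs : w ⁻¹' s = s) {a b : α}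
    (h : w.SameCycle a b) : a ∈ s ↔ b ∈ s := by
  obtain ⟨n, rfl⟩ := h.exists_nat_pow_eq
  clear h
  induction n with
  | zero => rfl
  | succ n ih =>
    rw [ih, pow_succ', mul_apply]
    exact (Set.ext_iff.1 hs _).symm

theorem preimage_eq_of_swap_mul_preimage_insert_eq [DecidableEq α] {w : Perm α} {s : Set α} {a : α}
    (ha : a ∉ s) (hwa : w a ∉ s)
    (h : (swap a (w a) * w) ⁻¹' insert a s = insert a s) : w ⁻¹' s = s := by
  ext i
  have hi : swap a (w a) (w i) = a ∨ swap a (w a) (w i) ∈ s ↔ i = a ∨ i ∈ s := Set.ext_iff.1 h i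
  have hfix : swap a (w a) (w i) = a ↔ i = a := by simp [swap_apply_eq_iff]
  rw [Set.mem_preimage]
  grind

/-- `w` runs through each of its cycles in circular order, going round once: no element of the
cycle of `a` lies strictly between `a` and `w a`. -/
def FollowsCircularOrder [CircularOrder α] (w : Perm α) : Prop :=
  ∀ ⦃a b⦄, w.SameCycle a b → ¬ sbtw a b (w a)

theorem val_finRotate {N : ℕ} (i : Fin N) :
    (finRotate N i : ℕ) = if (i : ℕ) + 1 = N then 0 else (i : ℕ) + 1 := by
  cases N with
  | zero => exact i.elim0
  | succ n => simp only [coe_finRotate, Fin.ext_iff, Fin.val_last, Nat.add_right_cancel_iff]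

theorem swap_mul_finRotate_preimage_insert_cIoo {N : ℕ} {a b : Fin N} (hab : a ≠ b) :
    (swap a b * finRotate N) ⁻¹' insert a (Set.cIoo a b) = insert a (Set.cIoo a b) := by
  ext i
  have hi := val_finRotate i
  simp only [Set.mem_preimage, Set.mem_insert_iff, Set.mem_cIoo, Fin.sbtw_iff, mul_apply,
    swap_apply_def, Fin.ext_iff, Fin.lt_def] at hab ⊢
  split_ifs at * <;> omega

theorem leT.followsCircularOrder {N : ℕ} {w : Perm (Fin N)}
    (h : leT (transpositions N) w (finRotate N)) : FollowsCircularOrder w := by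
  intro a b hab
  by_cases ha : w a = a
  · rw [ha]
    exact sbtw_irrefl_left_right
  have hle : leT {σ | σ.IsSwap} (swap a (w a) * w) (swap a (w a) * finRotate N) := by
    simpa only [swap_inv] using (swap_apply_leT ha).inv_mul_inv_mul mclosure_isSwap h
  have hinv : w ⁻¹' Set.cIoo a (w a) = Set.cIoo a (w a) :=
    preimage_eq_of_swap_mul_preimage_insert_eq (mt Set.mem_cIoo.1 sbtw_irrefl_left)
      (mt Set.mem_cIoo.1 sbtw_irrefl_right)
      (hle.preimage_eq (swap_mul_finRotate_preimage_insert_cIoo (Ne.symm ha)))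
  exact fun hb => sbtw_irrefl_left (Set.mem_cIoo.1 ((mem_iff_mem_of_sameCycle hinv hab).2 hb))

end CircularOrder

section SortedList

theorem isChain_sort_iff_forall_covBy {α : Type*} [LinearOrder α] {R : α → α → Prop}
    {S : Finset α} : S.sort.IsChain R ↔ ∀ a b : S, a ⋖ b → R a b := by
  let e := S.orderIsoOfFin rfl
  have he (i : Fin S.card) : S.sort[i] = (e i : α) := (S.coe_orderIsoOfFin_apply rfl i).symm
  have hcov (i j : Fin S.card) : e i ⋖ e j ↔ (i : ℕ) + 1 = j := by
    rw [apply_covBy_apply_iff, Fin.covBy_iff, Nat.covBy_iff_add_one_eq]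
  rw [List.isChain_iff_getElem]
  constructor
  · intro h a b hab
    obtain ⟨i, rfl⟩ := e.surjective a
    obtain ⟨j, rfl⟩ := e.surjective b
    have hij : (i : ℕ) + 1 = j := (hcov i j).1 hab
    simpa only [← he, Fin.getElem_fin, hij] using h i (by simp [hij])
  · intro h i hi
    rw [S.length_sort] at hi
    exact he ⟨i, by omega⟩ ▸ he ⟨i + 1, hi⟩ ▸ h _ _ ((hcov ⟨i, by omega⟩ ⟨i + 1, hi⟩).2 rfl)

theorem odd_length_iff_even_head_add_getLast {α : Type*} {f : α → ℕ} {l : List α} (hl : l ≠ [])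
    (h : l.IsChain fun a b => Odd (f a + f b)) :
    Odd l.length ↔ Even (f (l.head hl) + f (l.getLast hl)) := by
  induction l with
  | nil => contradiction
  | cons a l ih =>
    cases l with
    | nil => simp
    | cons b l =>
      rw [List.isChain_cons_cons] at h
      have ihb := ih (List.cons_ne_nil b l) h.2
      rw [List.head_cons] at ihb
      rw [List.length_cons, List.getLast_cons (List.cons_ne_nil b l), List.head_cons]
      grind

theorem odd_card_iff_even_min'_add_max' {α : Type*} [LinearOrder α] {f : α → ℕ} {S : Finset α}
    (hS : S.Nonempty) (h : ∀ a b : S, a ⋖ b → Odd (f a + f b)) :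
    Odd S.card ↔ Even (f (S.min' hS) + f (S.max' hS)) := by
  have hne : S.sort ≠ [] := by simpa [← List.length_pos_iff] using hS
  rw [← S.length_sort (· ≤ ·), odd_length_iff_even_head_add_getLast hne
    (isChain_sort_iff_forall_covBy.2 h), List.head_eq_getElem, List.getLast_eq_getElem,
    Finset.sorted_zero_eq_min', Finset.sorted_last_eq_max']

end SortedList

section OddDifferences

variable {N : ℕ}

theorem odFinset_iff_isChain {S : Finset (Fin N)} :
    ODfinset S ↔ Odd S.card ∧ S.sort.IsChain fun a b : Fin N => Odd ((b : ℕ) - (a : ℕ)) := by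
  -- `ODfinset` uses a relation on `ℕ`, so there `S.sort` is coerced to `List ℕ` by a `do` block.
  have hcoe : (do let a ← S.sort (· ≤ ·); pure (a : ℕ)) = S.sort.map fun a : Fin N => (a : ℕ) := by
    simp [List.map_eq_flatMap]
  rw [ODfinset, hcoe]
  exact and_congr_right fun _ => List.isChain_map _

theorem odFinset_iff_covBy {S : Finset (Fin N)} (hS : S.Nonempty) :
    ODfinset S ↔ (∀ a b : S, a ⋖ b → Odd ((a.1 : ℕ) + b.1)) ∧
      Even ((S.min' hS : ℕ) + S.max' hS) := by
  have hsub (a b : S) (hab : a ⋖ b) : Odd ((b.1 : ℕ) - a.1) ↔ Odd ((a.1 : ℕ) + b.1) := by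
    have : (a.1 : ℕ) < b.1 := hab.lt
    grind
  rw [odFinset_iff_isChain, isChain_sort_iff_forall_covBy, and_comm, forall₃_congr hsub]
  exact and_congr_right fun hodd =>
    odd_card_iff_even_min'_add_max' (f := fun a : Fin N => (a : ℕ)) hS hodd

theorem mem_orbitF {w : Perm (Fin N)} {a b : Fin N} : b ∈ orbitF w a ↔ w.SameCycle a b := by
  simp [orbitF]

theorem orbitF_nonempty (w : Perm (Fin N)) (a : Fin N) : (orbitF w a).Nonempty :=
  ⟨a, mem_orbitF.2 (SameCycle.refl w a)⟩

theorem apply_mem_orbitF {w : Perm (Fin N)} {a b : Fin N} : w b ∈ orbitF w a ↔ b ∈ orbitF w a := by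
  simp only [mem_orbitF, sameCycle_apply_right]

/-- The pointwise form of property (OD): `w` changes the parity exactly of those points that it
moves up. -/
def ChangesParityAtAscents (w : Perm (Fin N)) : Prop :=
  ∀ a : Fin N, Odd ((a : ℕ) + w a) ↔ a < w a

namespace FollowsCircularOrder

variable {w : Perm (Fin N)}

theorem mem_Icc_of_apply_le (hw : FollowsCircularOrder w) {a b : Fin N} (hab : w.SameCycle a b)
    (ha : w a ≤ a) : b ∈ Set.Icc (w a) a := by
  rcases ha.eq_or_lt with hfix | hlt
  · simp [← hab.eq_of_left hfix, hfix]
  · have := hw hab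
    rw [Fin.sbtw_iff] at this
    grind

theorem covBy_iff (hw : FollowsCircularOrder w) {c : Fin N} {a b : orbitF w c} :
    a ⋖ b ↔ a.1 < b.1 ∧ w a.1 = b.1 := by
  have hcycle (d : orbitF w c) : w.SameCycle a.1 d.1 :=
    (mem_orbitF.1 a.2).symm.trans (mem_orbitF.1 d.2)
  have hcov (h : a.1 < w a.1) : a ⋖ ⟨w a.1, apply_mem_orbitF.2 a.2⟩ :=
    ⟨h, fun d had hdw => hw (hcycle d) (Fin.sbtw_iff.2 (.inl ⟨had, hdw⟩))⟩
  constructor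
  · intro hab
    have ha : a.1 < w a.1 := by
      by_contra! hle
      exact (hw.mem_Icc_of_apply_le (hcycle b) hle).2.not_gt hab.lt
    exact ⟨hab.lt, congrArg Subtype.val ((hcov ha).unique_right hab)⟩
  · rintro ⟨hlt, hb⟩
    convert hcov (hb ▸ hlt)
    exact hb.symm

theorem eq_max'_and_apply_eq_min' (hw : FollowsCircularOrder w) {a c : Fin N}
    (hc : c ∈ orbitF w a) (hle : w c ≤ c) :
    c = (orbitF w a).max' (orbitF_nonempty w a) ∧
      w c = (orbitF w a).min' (orbitF_nonempty w a) := by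
  have hIcc (b : Fin N) (hb : b ∈ orbitF w a) : b ∈ Set.Icc (w c) c :=
    hw.mem_Icc_of_apply_le ((mem_orbitF.1 hc).symm.trans (mem_orbitF.1 hb)) hle
  exact ⟨le_antisymm (Finset.le_max' _ c hc) (hIcc _ (Finset.max'_mem _ _)).2,
    le_antisymm (hIcc _ (Finset.min'_mem _ _)).1 (Finset.min'_le _ _ (apply_mem_orbitF.2 hc))⟩

theorem odFinset_orbitF_iff (hw : FollowsCircularOrder w) (a : Fin N) :
    ODfinset (orbitF w a) ↔ ∀ c ∈ orbitF w a, (Odd ((c : ℕ) + w c) ↔ c < w c) := by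
  rw [odFinset_iff_covBy (orbitF_nonempty w a)]
  constructor
  · rintro ⟨hodd, heven⟩ c hc
    rcases lt_or_ge c (w c) with hlt | hle
    · have hcov : (⟨c, hc⟩ : orbitF w a) ⋖ ⟨w c, apply_mem_orbitF.2 hc⟩ :=
        hw.covBy_iff.2 ⟨hlt, rfl⟩
      exact iff_of_true (hodd _ _ hcov) hlt
    · obtain ⟨hmax, hmin⟩ := hw.eq_max'_and_apply_eq_min' hc hle
      rw [← hmax, ← hmin, add_comm] at heven
      exact iff_of_false (Nat.not_odd_iff_even.2 heven) hle.not_gt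
  · intro h
    refine ⟨fun b c hbc => ?_, ?_⟩
    · obtain ⟨hlt, hc⟩ := hw.covBy_iff.1 hbc
      exact hc ▸ (h b b.2).2 (hc ▸ hlt)
    · have hmem := (orbitF w a).max'_mem (orbitF_nonempty w a)
      have hle := (orbitF w a).le_max' _ (apply_mem_orbitF.2 hmem)
      rw [← (hw.eq_max'_and_apply_eq_min' hmem hle).2, add_comm, ← Nat.not_odd_iff_even, h _ hmem]
      exact hle.not_gt

theorem satisfiesOD_iff (hw : FollowsCircularOrder w) :
    satisfiesOD w ↔ ChangesParityAtAscents w := by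
  simp only [satisfiesOD, hw.odFinset_orbitF_iff]
  exact ⟨fun h a => h a a (mem_orbitF.2 (SameCycle.refl w a)), fun h _ c _ => h c⟩

end FollowsCircularOrder

theorem leT.changesParityAtAscents_inv_mul {x y : Perm (Fin N)} (hxy : leT (transpositions N) x y)
    (hcirc : FollowsCircularOrder y) (hx : ChangesParityAtAscents x)
    (hy : ChangesParityAtAscents y) : ChangesParityAtAscents (x⁻¹ * y) := by
  intro a
  obtain ⟨d, hd⟩ : ∃ d, (x⁻¹ * y) a = d := ⟨_, rfl⟩
  have hxd : x d = y a := by simp [← hd]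
  have hcycle : y.SameCycle a d := by
    have := leT.sameCycle_apply hxy d
    rw [hxd, sameCycle_apply_right] at this
    exact this.symm
  have hposition : (d ≤ a ∧ a < y a) ∨ (a < y a ∧ y a ≤ d) ∨ (y a ≤ d ∧ d ≤ a) := by
    rcases lt_or_ge a (y a) with hlt | hle
    · have hnot := hcirc hcycle
      rw [Fin.sbtw_iff] at hnot
      grind
    · exact .inr (.inr (hcirc.mem_Icc_of_apply_le hcycle hle))
  have hxodd : Odd ((d : ℕ) + y a) ↔ d < y a := hxd ▸ hx d
  have hyodd : Odd ((a : ℕ) + y a) ↔ a < y a := hy a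
  rw [hd]
  rcases hposition with h | h | h <;> grind

end OddDifferences

theorem stmt10 (N : ℕ) (x y : Perm (Fin N)) (hx : memONC x) (hy : memONC y)
    (hxy : leT (transpositions N) x y) : memONC (x⁻¹ * y) := by
  obtain ⟨hxc, hxOD⟩ := hx
  obtain ⟨hyc, hyOD⟩ := hy
  have hzc : leT (transpositions N) (x⁻¹ * y) (finRotate N) :=
    hxy.inv_mul mclosure_isSwap mapsTo_conj_isSwap hyc
  have hxcirc := hxc.followsCircularOrder
  have hycirc := hyc.followsCircularOrder
  refine ⟨hzc, hzc.followsCircularOrder.satisfiesOD_iff.2 ?_⟩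
  exact hxy.changesParityAtAscents_inv_mul hycirc (hxcirc.satisfiesOD_iff.1 hxOD)
    (hycirc.satisfiesOD_iff.1 hyOD)
end

section
/- Let F_N(q) = Σ_{x ∈ A_N} q^{ocyc(x)} where ocyc(x) is the number of odd cycles of x including fixed points. Then the exponential generating function Σ_{N≥0} F_N(q) t^N/N! equals (1/2)[(1+t)^{(q-1)/2}(1-t)^{-(q+1)/2} + (1+t)^{(q+1)/2}(1-t)^{-(q-1)/2}]. -/
open Equiv Equiv.Perm

open scoped Classical in
/-- `F_N(q) = ∑_{x ∈ A_N} q^{ocyc(x)}`. -/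
noncomputable def Fpoly (N : ℕ) (q : ℝ) : ℝ :=
  ∑ x ∈ Finset.univ.filter (fun x : Perm (Fin N) => x ∈ alternatingGroup (Fin N)),
    q ^ ocyc x

/-!
Weight a permutation by the product over its cycles, fixed points included, of a factor depending
only on the cycle length: `q` for odd lengths and `e` for even lengths. For `e = 1` the weight is
`q ^ ocyc`, and for `e = -1` it is `sign * q ^ ocyc`, so `F_N` is half the sum of the two total
weights over the symmetric group.

By the exponential formula, the exponential generating function `A` of such a weight `w` satisfies
`A' = (w 1 + w 2 X + w 3 X² + ⋯) A`. For the parity weight the factor is `(q + e X) / (1 - X²)`,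
which is also the logarithmic derivative of `(1 + X) ^ ((q - e) / 2) * (1 - X) ^ (-(q + e) / 2)`.
-/

section CentralizerCard

open scoped Nat

/-- The order `∏ i, i ^ mᵢ * mᵢ!` of the centralizer of a permutation whose cycles, fixed points
included, have the lengths in `s`, where `mᵢ` is the multiplicity of `i` in `s`. -/
def centralizerCard (s : Multiset ℕ) : ℕ :=
  s.prod * ∏ i ∈ s.toFinset, (s.count i)!

lemma centralizerCard_ne_zero {s : Multiset ℕ} (hs : 0 ∉ s) : centralizerCard s ≠ 0 :=
  mul_ne_zero (Multiset.prod_ne_zero hs)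
    (Finset.prod_ne_zero_iff.2 fun _ _ => Nat.factorial_ne_zero _)

lemma centralizerCard_cons (i : ℕ) (s : Multiset ℕ) :
    centralizerCard (i ::ₘ s) = i * (s.count i + 1) * centralizerCard s := by
  have insert_prod : ∏ j ∈ s.toFinset, (s.count j)! = ∏ j ∈ insert i s.toFinset, (s.count j)! :=
    Finset.prod_subset (Finset.subset_insert _ _) fun j _ hj => by
      rw [Multiset.count_eq_zero_of_notMem (by simpa using hj), Nat.factorial_zero]
  have others : ∏ j ∈ (insert i s.toFinset).erase i, ((i ::ₘ s).count j)! =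
      ∏ j ∈ (insert i s.toFinset).erase i, (s.count j)! :=
    Finset.prod_congr rfl fun j hj => by
      rw [Multiset.count_cons_of_ne (Finset.ne_of_mem_erase hj)]
  have hi : i ∈ insert i s.toFinset := Finset.mem_insert_self _ _
  rw [centralizerCard, centralizerCard, insert_prod, Multiset.toFinset_cons,
    ← Finset.mul_prod_erase _ _ hi, ← Finset.mul_prod_erase _ (fun j => (s.count j)!) hi, others,
    Multiset.count_cons_self, Nat.factorial_succ, Multiset.prod_cons]
  ring

lemma centralizerCard_add_replicate_one {s : Multiset ℕ} (hs : 1 ∉ s) (k : ℕ) :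
    centralizerCard (s + Multiset.replicate k 1) = k ! * centralizerCard s := by
  induction k with
  | zero => simp
  | succ k ih =>
    rw [Multiset.replicate_succ, Multiset.add_cons, centralizerCard_cons, ih, Multiset.count_add,
      Multiset.count_eq_zero_of_notMem hs, Multiset.count_replicate_self, Nat.factorial_succ]
    ring

lemma parts_eq_filter_add_replicate_one {n : ℕ} (p : n.Partition) :
    p.parts = p.parts.filter (2 ≤ ·) + Multiset.replicate (p.parts.count 1) 1 := by
  have ones : p.parts.filter (fun i => ¬ 2 ≤ i) = Multiset.replicate (p.parts.count 1) 1 := by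
    rw [← Multiset.filter_eq']
    refine Multiset.filter_congr fun i hi => ?_
    have := p.parts_pos hi
    omega
  rw [← ones, Multiset.filter_add_not]

lemma sum_filter_add_count_one {n : ℕ} (p : n.Partition) :
    (p.parts.filter (2 ≤ ·)).sum + p.parts.count 1 = n := by
  have h := congrArg Multiset.sum (parts_eq_filter_add_replicate_one p)
  rwa [p.parts_sum, Multiset.sum_add, Multiset.sum_replicate, smul_eq_mul, mul_one, eq_comm] at h

variable {α : Type*} [Fintype α] [DecidableEq α]

lemma partition_eq_iff_cycleType_eq {σ : Perm α} {p : (Fintype.card α).Partition} :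
    σ.partition = p ↔ σ.cycleType = p.parts.filter (2 ≤ ·) := by
  refine ⟨fun h => h ▸ filter_parts_partition_eq_cycleType.symm, fun h => ?_⟩
  have fixed_points : Fintype.card α - σ.support.card = p.parts.count 1 := by
    rw [← sum_cycleType, h]
    exact Nat.sub_eq_of_eq_add' (sum_filter_add_count_one p).symm
  rw [Nat.Partition.ext_iff, parts_partition, fixed_points, h, ← parts_eq_filter_add_replicate_one]

lemma card_partition_eq_mul_centralizerCard (p : (Fintype.card α).Partition) :
    (Finset.univ.filter fun σ : Perm α => σ.partition = p).card * centralizerCard p.parts =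
      (Fintype.card α)! := by
  set m := p.parts.filter (2 ≤ ·) with hm
  have hsum : m.sum + p.parts.count 1 = Fintype.card α := sum_filter_add_count_one p
  have card_mul := card_of_cycleType_mul_eq α m
  rw [if_pos ⟨by omega, by simp [hm]⟩, show Fintype.card α - m.sum = p.parts.count 1 by omega]
    at card_mul
  rw [parts_eq_filter_add_replicate_one p, ← hm, centralizerCard_add_replicate_one (by simp [hm]),
    ← card_mul, centralizerCard]
  simp only [partition_eq_iff_cycleType_eq, ← hm, mul_assoc]

end CentralizerCard

section ExponentialFormula

open PowerSeries
open scoped Nat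

lemma sum_partition_mem_parts {M : Type*} [AddCommMonoid M] {n i : ℕ} (hi : 1 ≤ i) (hin : i ≤ n)
    (f : Multiset ℕ → M) :
    ∑ p : n.Partition with i ∈ p.parts, f p.parts =
      ∑ p : (n - i).Partition, f (i ::ₘ p.parts) := by
  rw [Finset.sum_subtype _ (p := fun p : n.Partition => i ∈ p.parts) (by simp)]
  refine Fintype.sum_equiv (Nat.Partition.partitionWithPartEquiv hi hin) _ _ fun p => ?_
  rw [Nat.Partition.partitionWithPartEquiv_apply_parts, Multiset.cons_erase p.2]

lemma sum_mul_count_parts {n : ℕ} (p : n.Partition) :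
    ∑ i ∈ Finset.range n, (i + 1) * p.parts.count (i + 1) = n := by
  have parts_subset : p.parts.toFinset ⊆ Finset.Ico 1 (n + 1) := fun i hi => by
    rw [Multiset.mem_toFinset] at hi
    exact Finset.mem_Ico.2 ⟨p.parts_pos hi, Nat.lt_succ_of_le (p.le_of_mem_parts hi)⟩
  have sum_parts := Finset.sum_multiset_count_of_subset p.parts _ parts_subset
  rw [p.parts_sum, ← zero_add 1, ← Finset.sum_Ico_add', ← Finset.range_eq_Ico] at sum_parts
  simpa only [smul_eq_mul, mul_comm, zero_add] using sum_parts.symm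

variable {K : Type*} [Field K]

/-- The weight `∏ w i / centralizerCard s` with which the cycle type `s` contributes to the cycle
index, where each cycle of length `i` is marked by `w i`. -/
def cycleTypeWeight (w : ℕ → K) (s : Multiset ℕ) : K :=
  (s.map w).prod / centralizerCard s

/-- The exponential generating function of permutations, each weighted by the product of `w i` over
the lengths `i` of its cycles, fixed points included. The value `w 0` is irrelevant. -/
noncomputable def cycleEGF (w : ℕ → K) : K⟦X⟧ :=
  mk fun n => (∑ σ : Perm (Fin n), (σ.partition.parts.map w).prod) / n !

lemma constantCoeff_cycleEGF (w : ℕ → K) : constantCoeff (cycleEGF w) = 1 := by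
  simp [cycleEGF, ← coeff_zero_eq_constantCoeff_apply, parts_partition]

variable [CharZero K]

lemma mul_count_mul_cycleTypeWeight_cons (w : ℕ → K) {i : ℕ} (hi : i ≠ 0) (s : Multiset ℕ) :
    (i * (i ::ₘ s).count i : ℕ) * cycleTypeWeight w (i ::ₘ s) = w i * cycleTypeWeight w s := by
  have factor_ne_zero : ((i * (s.count i + 1) : ℕ) : K) ≠ 0 :=
    Nat.cast_ne_zero.2 (mul_ne_zero hi (Nat.succ_ne_zero _))
  rw [cycleTypeWeight, cycleTypeWeight, centralizerCard_cons, Multiset.count_cons_self,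
    Multiset.map_cons, Multiset.prod_cons, Nat.cast_mul _ (centralizerCard s), ← mul_div_assoc,
    mul_div_mul_left _ _ factor_ne_zero, mul_div_assoc]

lemma coeff_cycleEGF (w : ℕ → K) (n : ℕ) :
    coeff n (cycleEGF w) = ∑ p : n.Partition, cycleTypeWeight w p.parts := by
  have fiber (p : (Fintype.card (Fin n)).Partition) :
      ∑ σ : Perm (Fin n) with σ.partition = p, (σ.partition.parts.map w).prod =
        (Fintype.card (Fin n))! * cycleTypeWeight w p.parts := by
    have hp : (centralizerCard p.parts : K) ≠ 0 :=
      Nat.cast_ne_zero.2 (centralizerCard_ne_zero fun h => (p.parts_pos h).false)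
    rw [← card_partition_eq_mul_centralizerCard p, Nat.cast_mul, cycleTypeWeight, mul_assoc,
      mul_div_cancel₀ _ hp, ← nsmul_eq_mul, ← Finset.sum_const]
    exact Finset.sum_congr rfl fun σ hσ => by rw [(Finset.mem_filter.1 hσ).2]
  have total : ∑ σ : Perm (Fin n), (σ.partition.parts.map w).prod =
      (Fintype.card (Fin n))! *
        ∑ p : (Fintype.card (Fin n)).Partition, cycleTypeWeight w p.parts := by
    rw [← Finset.sum_fiberwise Finset.univ (fun σ : Perm (Fin n) => σ.partition), Finset.mul_sum]
    exact Finset.sum_congr rfl fun p _ => fiber p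
  rw [cycleEGF, coeff_mk, total, Fintype.card_fin,
    mul_div_cancel_left₀ _ (Nat.cast_ne_zero.2 n.factorial_ne_zero)]

lemma sum_mul_count_mul_cycleTypeWeight (w : ℕ → K) {n i : ℕ} (hi : 1 ≤ i) (hin : i ≤ n) :
    ∑ p : n.Partition, (i * p.parts.count i : ℕ) * cycleTypeWeight w p.parts =
      w i * coeff (n - i) (cycleEGF w) := by
  have mem_of_ne_zero : ∀ p : n.Partition,
      ((i * p.parts.count i : ℕ) : K) * cycleTypeWeight w p.parts ≠ 0 → i ∈ p.parts := by
    intro p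
    contrapose!
    intro hp
    rw [Multiset.count_eq_zero_of_notMem hp, mul_zero, Nat.cast_zero, zero_mul]
  rw [← Finset.sum_filter_of_ne fun p _ => mem_of_ne_zero p,
    sum_partition_mem_parts hi hin fun s => (i * s.count i : ℕ) * cycleTypeWeight w s,
    coeff_cycleEGF, Finset.mul_sum]
  exact Finset.sum_congr rfl fun p _ =>
    mul_count_mul_cycleTypeWeight_cons w (Nat.one_le_iff_ne_zero.1 hi) p.parts

theorem derivative_cycleEGF (w : ℕ → K) :
    d⁄dX K (cycleEGF w) = mk (fun n => w (n + 1)) * cycleEGF w := by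
  ext n
  -- Count the `n + 1` cells of a partition by the size of the part containing them.
  calc coeff n (d⁄dX K (cycleEGF w))
      = ∑ p : (n + 1).Partition, (n + 1 : ℕ) * cycleTypeWeight w p.parts := by
        rw [coeff_derivative, coeff_cycleEGF, mul_comm, ← Nat.cast_succ, Finset.mul_sum]
    _ = ∑ p : (n + 1).Partition, ∑ i ∈ Finset.range (n + 1),
          ((i + 1) * p.parts.count (i + 1) : ℕ) * cycleTypeWeight w p.parts := by
        refine Finset.sum_congr rfl fun p _ => ?_
        rw [← Finset.sum_mul, ← Nat.cast_sum, sum_mul_count_parts]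
    _ = ∑ i ∈ Finset.range (n + 1), w (i + 1) * coeff (n - i) (cycleEGF w) := by
        rw [Finset.sum_comm]
        refine Finset.sum_congr rfl fun i hi => ?_
        rw [sum_mul_count_mul_cycleTypeWeight w (Nat.le_add_left 1 i)
          (Nat.succ_le_of_lt (Finset.mem_range.1 hi)), Nat.add_sub_add_right]
    _ = coeff n (mk (fun n => w (n + 1)) * cycleEGF w) := by
        simp only [coeff_mul, coeff_mk, Finset.Nat.sum_antidiagonal_eq_sum_range_succ_mk]

end ExponentialFormula

section LogarithmicDerivative

open PowerSeries

variable {R : Type*} [CommRing R]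

lemma eq_zero_of_derivative_eq_mul [IsAddTorsionFree R] {f h : R⟦X⟧} (hf : d⁄dX R f = h * f)
    (hf0 : constantCoeff f = 0) : f = 0 := by
  ext n
  induction n using Nat.strong_induction_on with
  | _ n ih =>
    rcases n with _ | n
    · simpa using hf0
    have hn : coeff (n + 1) f * (n + 1) = 0 := by
      rw [← coeff_derivative, hf, coeff_mul]
      refine Finset.sum_eq_zero fun ij hij => ?_
      have hlt : ij.2 < n + 1 := Nat.lt_succ_of_le (Finset.HasAntidiagonal.antidiagonal.snd_le hij)
      rw [ih ij.2 hlt, map_zero, mul_zero]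
    rw [mul_comm, ← Nat.cast_succ, ← nsmul_eq_mul] at hn
    exact (nsmul_eq_zero_iff_right n.succ_ne_zero).1 hn

lemma eq_of_derivative_eq_mul [IsAddTorsionFree R] {f g h : R⟦X⟧} (hf : d⁄dX R f = h * f)
    (hg : d⁄dX R g = h * g) (hfg : constantCoeff f = constantCoeff g) : f = g :=
  sub_eq_zero.1 <| eq_zero_of_derivative_eq_mul (h := h) (by rw [map_sub, hf, hg, mul_sub])
    (by rw [map_sub, hfg, sub_self])

lemma rescale_C (c r : R) : rescale c (C r) = C r := by
  ext n
  rcases n with _ | n <;> simp [coeff_rescale, coeff_C]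

lemma derivative_rescale (c : R) (f : R⟦X⟧) :
    d⁄dX R (rescale c f) = C c * rescale c (d⁄dX R f) := by
  ext n
  simp only [coeff_derivative, coeff_rescale, coeff_C_mul]
  ring

variable [BinomialRing R]

lemma succ_mul_choose_succ (a : R) (n : ℕ) :
    (n + 1) * Ring.choose a (n + 1) = (a - n) * Ring.choose a n := by
  have h := Ring.choose_smul_choose a n.le_succ
  rw [Nat.succ_eq_add_one, Nat.choose_succ_self_right, Nat.add_sub_cancel_left,
    Ring.choose_one_right, nsmul_eq_mul, Nat.cast_succ] at h
  rw [h, mul_comm]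

lemma one_add_X_mul_derivative_binomialSeries (a : R) :
    (1 + X) * d⁄dX R (PowerSeries.binomialSeries R a) = C a * PowerSeries.binomialSeries R a := by
  ext n
  have choose_rec := succ_mul_choose_succ a n
  rcases n with _ | n <;>
  · simp only [add_mul, one_mul, map_add, coeff_derivative, coeff_succ_X_mul, coeff_zero_X_mul,
      coeff_C_mul, binomialSeries_coeff, smul_eq_mul, mul_one]
    push_cast at choose_rec ⊢
    linear_combination choose_rec

lemma one_sub_X_mul_derivative_rescale_binomialSeries (b : R) :
    (1 - X) * d⁄dX R (rescale (-1) (PowerSeries.binomialSeries R b)) =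
      -(C b * rescale (-1) (PowerSeries.binomialSeries R b)) := by
  have h := congrArg (rescale (-1 : R)) (one_add_X_mul_derivative_binomialSeries b)
  simp only [map_mul, map_add, map_one, rescale_X, rescale_C, map_neg] at h
  rw [derivative_rescale, map_neg, map_one]
  linear_combination -h

end LogarithmicDerivative

section ParityWeight

open PowerSeries

/-- The cycle weight `q` for odd and `e` for even cycle lengths. -/
def parityWeight {R : Type*} (q e : R) (n : ℕ) : R :=
  if Odd n then q else e

lemma one_sub_X_sq_mul_mk_parityWeight {R : Type*} [CommRing R] (q e : R) :
    (1 - X ^ 2) * PowerSeries.mk (fun n => parityWeight q e (n + 1)) = C q + C e * X := by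
  ext n
  rcases n with _ | _ | n <;>
    simp [sub_mul, parityWeight, coeff_X_pow_mul', coeff_C, Nat.odd_add_one, Nat.even_add_one]

theorem cycleEGF_parityWeight {K : Type*} [Field K] [CharZero K] (q e : K) :
    cycleEGF (parityWeight q e) = PowerSeries.binomialSeries K ((q - e) / 2) *
      rescale (-1) (PowerSeries.binomialSeries K (-(q + e) / 2)) := by
  set a := (q - e) / 2
  set b := -(q + e) / 2
  set u := PowerSeries.binomialSeries K a
  set v := rescale (-1) (PowerSeries.binomialSeries K b)
  have hq : (C q : K⟦X⟧) = C a - C b := by rw [← map_sub]; congr 1; ring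
  have he : (C e : K⟦X⟧) = -(C a + C b) := by rw [← map_add, ← map_neg]; congr 1; ring
  have one_sub_ne_zero : (1 - X ^ 2 : K⟦X⟧) ≠ 0 := fun h => by
    simpa using congrArg constantCoeff h
  have hu : (1 + X) * d⁄dX K u = C a * u := one_add_X_mul_derivative_binomialSeries a
  have hv : (1 - X) * d⁄dX K v = -(C b * v) := one_sub_X_mul_derivative_rescale_binomialSeries b
  refine eq_of_derivative_eq_mul (derivative_cycleEGF _) (mul_left_cancel₀ one_sub_ne_zero ?_) ?_
  · rw [← mul_assoc, one_sub_X_sq_mul_mk_parityWeight, hq, he, Derivation.leibniz, smul_eq_mul,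
      smul_eq_mul]
    linear_combination (1 - X) * v * hu + (1 + X) * u * hv
  · have hv0 : constantCoeff v = 1 := by
      rw [← coeff_zero_eq_constantCoeff_apply, coeff_rescale]
      simp
    rw [constantCoeff_cycleEGF, map_mul, binomialSeries_constantCoeff, hv0, mul_one]

end ParityWeight

section Evaluation

open PowerSeries

lemma hasSum_coeff_mul_mul_pow {𝕜 : Type*} [RCLike 𝕜] {f g : 𝕜⟦X⟧} {t x y : 𝕜}
    (hf : HasSum (fun n => coeff n f * t ^ n) x) (hg : HasSum (fun n => coeff n g * t ^ n) y) :
    HasSum (fun n => coeff n (f * g) * t ^ n) (x * y) := by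
  have h := hasSum_sum_range_mul_of_summable_norm hf.summable.norm hg.summable.norm
  rw [hf.tsum_eq, hg.tsum_eq] at h
  refine h.congr_fun fun n => ?_
  rw [coeff_mul, Finset.Nat.sum_antidiagonal_eq_sum_range_succ_mk, Finset.sum_mul]
  refine Finset.sum_congr rfl fun k hk => ?_
  rw [mul_mul_mul_comm, ← pow_add, Nat.add_sub_cancel' (Finset.mem_range_succ_iff.1 hk)]

lemma hasSum_coeff_binomialSeries_mul_pow (a : ℝ) {t : ℝ} (ht : |t| < 1) :
    HasSum (fun n => coeff n (PowerSeries.binomialSeries ℝ a) * t ^ n) ((1 + t) ^ a) := by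
  have t_mem_ball : t ∈ Metric.eball (0 : ℝ) 1 := by
    rw [mem_eball_zero_iff, ← ofReal_norm]
    simpa using ht
  simpa only [binomialSeries_apply, List.ofFn_const, List.prod_replicate, smul_eq_mul, zero_add,
    binomialSeries_coeff, mul_one]
    using (Real.one_add_rpow_hasFPowerSeriesOnBall_zero (a := a)).hasSum t_mem_ball

theorem hasSum_coeff_cycleEGF_parityWeight (q e : ℝ) {t : ℝ} (ht : |t| < 1) :
    HasSum (fun n => coeff n (cycleEGF (parityWeight q e)) * t ^ n)
      ((1 + t) ^ ((q - e) / 2) * (1 - t) ^ (-(q + e) / 2)) := by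
  rw [cycleEGF_parityWeight]
  refine hasSum_coeff_mul_mul_pow (hasSum_coeff_binomialSeries_mul_pow _ ht) ?_
  have h := hasSum_coeff_binomialSeries_mul_pow (-(q + e) / 2) (abs_neg t ▸ ht)
  simpa only [coeff_rescale, ← sub_eq_add_neg, neg_pow t, mul_left_comm, mul_assoc] using h

end Evaluation

section AlternatingGroup

variable {N : ℕ}

lemma ocyc_eq_countP_odd_parts (σ : Perm (Fin N)) : ocyc σ = σ.partition.parts.countP Odd := by
  rw [ocyc, parts_partition, Multiset.countP_add, Multiset.countP_eq_card_filter, sum_cycleType,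
    Fintype.card_fin]
  have odd_ones (k : ℕ) : (Multiset.replicate k 1).countP Odd = k := by
    rw [Multiset.countP_eq_card.2, Multiset.card_replicate]
    exact fun n hn => Multiset.eq_of_mem_replicate hn ▸ odd_one
  rw [odd_ones]

lemma prod_map_parityWeight_one {R : Type*} [CommMonoid R] (q : R) (s : Multiset ℕ) :
    (s.map (parityWeight q 1)).prod = q ^ s.countP (Odd ·) := by
  induction s using Multiset.induction_on with
  | empty => simp
  | cons n s ih => by_cases hn : Odd n <;> simp [parityWeight, hn, ih, pow_succ']

lemma sign_eq_prod_map_parts {α : Type*} [Fintype α] [DecidableEq α] (σ : Perm α) :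
    sign σ = (σ.partition.parts.map fun n => -(-1 : ℤˣ) ^ n).prod := by
  simp [parts_partition, sign_of_cycleType']

lemma parityWeight_neg_one {R : Type*} [Ring R] (q : R) (n : ℕ) :
    parityWeight q (-1) n = ((-(-1) ^ n : ℤˣ) : ℤ) * parityWeight q 1 n := by
  rcases n.even_or_odd with hn | hn
  · simp [parityWeight, hn, Nat.not_odd_iff_even.2 hn]
  · simp [parityWeight, hn]

variable {R : Type*} [CommRing R]

lemma prod_map_parts_parityWeight_one (q : R) (σ : Perm (Fin N)) :
    (σ.partition.parts.map (parityWeight q 1)).prod = q ^ ocyc σ := by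
  rw [prod_map_parityWeight_one, ocyc_eq_countP_odd_parts]

lemma prod_map_parts_parityWeight_neg_one (q : R) (σ : Perm (Fin N)) :
    (σ.partition.parts.map (parityWeight q (-1))).prod = (sign σ : ℤ) * q ^ ocyc σ := by
  rw [← prod_map_parts_parityWeight_one, sign_eq_prod_map_parts]
  simp only [parityWeight_neg_one q, Multiset.prod_map_mul]
  congr 1
  have cast_prod := map_multiset_prod ((Int.castRingHom R : ℤ →* R).comp (Units.coeHom ℤ))
    (σ.partition.parts.map fun n => -(-1 : ℤˣ) ^ n)
  rw [Multiset.map_map] at cast_prod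
  exact cast_prod.symm

theorem Fpoly_div_factorial (N : ℕ) (q : ℝ) :
    Fpoly N q / Nat.factorial N = (1 / 2) * (PowerSeries.coeff N (cycleEGF (parityWeight q 1)) +
      PowerSeries.coeff N (cycleEGF (parityWeight q (-1)))) := by
  classical
  have even_indicator (σ : Perm (Fin N)) :
      (if σ ∈ alternatingGroup (Fin N) then q ^ ocyc σ else 0) =
        (1 / 2) * (q ^ ocyc σ + (sign σ : ℤ) * q ^ ocyc σ) := by
    rw [mem_alternatingGroup]
    rcases Int.units_eq_one_or (sign σ) with hσ | hσ
    · rw [if_pos hσ, hσ, Units.val_one, Int.cast_one]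
      ring
    · simp [hσ]
  simp only [cycleEGF, PowerSeries.coeff_mk, prod_map_parts_parityWeight_one,
    prod_map_parts_parityWeight_neg_one]
  rw [← add_div, ← Finset.sum_add_distrib, ← mul_div_assoc, Finset.mul_sum, Fpoly,
    Finset.sum_filter, Finset.sum_congr rfl fun σ _ => even_indicator σ]

end AlternatingGroup

theorem stmt12 (q t : ℝ) (ht : |t| < 1) :
    HasSum (fun N : ℕ => Fpoly N q * t ^ N / (Nat.factorial N : ℝ))
      ((1/2) * ((1+t) ^ ((q-1)/2) * (1-t) ^ (-(q+1)/2)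
        + (1+t) ^ ((q+1)/2) * (1-t) ^ (-(q-1)/2))) := by
  have unsigned := hasSum_coeff_cycleEGF_parityWeight q 1 ht
  have signed := hasSum_coeff_cycleEGF_parityWeight q (-1) ht
  rw [sub_neg_eq_add, ← sub_eq_add_neg] at signed
  refine ((unsigned.add signed).mul_left (1 / 2)).congr_fun fun N => ?_
  rw [mul_div_right_comm, Fpoly_div_factorial, mul_assoc, add_mul]
end
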